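/- arXiv:2509.20296 — 6 statements merged into one kernel-verified Lean document; each statement's English description precedes it below -/
import Mathlib

section
/- Let n ≥ 1, let 1 ≤ p < ∞, and let Ω ⊆ ℝⁿ be a Lebesgue measurable set such that for every R > 0 there exists y ∈ ℝⁿ with B(y,R) ⊆ Ω (Ω contains open balls of arbitrarily large radius). Let a ∈ L^∞(ℝⁿ;ℂ) and suppose there is M ≥ 0 such that ‖F^{-1}(a·Fu)‖_{L^p(ℝⁿ)} ≤ M‖u‖_{L^p(ℝⁿ)} for all u ∈ L²(ℝⁿ) ∩ L^p(ℝⁿ) (i.e., a is a Fourier multiplier on L^p(ℝⁿ)). Then ‖a‖_{L^∞(ℝⁿ)} ≤ sup{ ‖W_Ω(a)u‖_{L^p(Ω)} : u ∈ L²(Ω) ∩ L^p(Ω), ‖u‖_{L^p(Ω)} ≤ 1 }, the supremum being taken in [0,∞]. -/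
open MeasureTheory Filter Metric Complex ENNReal NNReal

noncomputable section

abbrev Eucl (n : ℕ) := EuclideanSpace ℝ (Fin n)

/-- The Fourier integral with the convention `(Fu)(ξ) = ∫ u(x) e^{-i x·ξ} dx`. -/
def fourierInt {n : ℕ} (u : Eucl n → ℂ) (ξ : Eucl n) : ℂ :=
  ∫ x : Eucl n, Complex.exp (-(Complex.I * ((inner ℝ x ξ : ℝ) : ℂ))) * u x

/-- The inverse Fourier integral `(F⁻¹u)(x) = (2π)^{-n} ∫ u(ξ) e^{i x·ξ} dξ`. -/
def fourierIntInv {n : ℕ} (u : Eucl n → ℂ) (x : Eucl n) : ℂ :=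
  (((2 * Real.pi) ^ n : ℝ)⁻¹ : ℂ) • ∫ ξ : Eucl n, Complex.exp (Complex.I * ((inner ℝ x ξ : ℝ) : ℂ)) * u ξ

/-- A pair consisting of the Fourier–Plancherel transform on `L²(ℝⁿ;ℂ)` and its inverse:
continuous linear maps on `L²` that are mutually inverse and agree with the Fourier
integral (resp. the inverse Fourier integral) on `L¹ ∩ L²`.  Such a pair exists and is
unique by Plancherel's theorem. -/
structure FourierPlancherelPair (n : ℕ) where
  F : Lp ℂ 2 (volume : Measure (Eucl n)) →L[ℂ] Lp ℂ 2 (volume : Measure (Eucl n))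
  Finv : Lp ℂ 2 (volume : Measure (Eucl n)) →L[ℂ] Lp ℂ 2 (volume : Measure (Eucl n))
  inv_comp : ∀ u, Finv (F u) = u
  comp_inv : ∀ u, F (Finv u) = u
  F_int : ∀ (u : Eucl n → ℂ), Integrable u → ∀ (hu2 : MemLp u 2 (volume : Measure (Eucl n))),
    (F (hu2.toLp u) : Eucl n → ℂ) =ᵐ[volume] fourierInt u
  Finv_int : ∀ (u : Eucl n → ℂ), Integrable u → ∀ (hu2 : MemLp u 2 (volume : Measure (Eucl n))),
    (Finv (hu2.toLp u) : Eucl n → ℂ) =ᵐ[volume] fourierIntInv u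

/-- Multiplication by an `L^∞` function as a map on `L²`. -/
def mulOp {n : ℕ} (a : Eucl n → ℂ) (ha : MemLp a ⊤ (volume : Measure (Eucl n)))
    (v : Lp ℂ 2 (volume : Measure (Eucl n))) : Lp ℂ 2 (volume : Measure (Eucl n)) :=
  (((Lp.memLp v).smul ha : MemLp (a • (v : Eucl n → ℂ)) 2 volume)).toLp _

/-- The Wiener–Hopf type operator `W_Ω(a) u = r_Ω F⁻¹ (a · F(e_Ω u))`, realised as a function
on `ℝⁿ` supported in `Ω` (i.e. `e_Ω W_Ω(a) u`). -/
def WOp {n : ℕ} (FP : FourierPlancherelPair n) (a : Eucl n → ℂ) (ha : MemLp a ⊤ (volume : Measure (Eucl n)))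
    (Ω : Set (Eucl n)) (u : Eucl n → ℂ) (hu : MemLp (Ω.indicator u) 2 (volume : Measure (Eucl n))) :
    Eucl n → ℂ :=
  Ω.indicator (FP.Finv (mulOp a ha (FP.F (hu.toLp _))) : Eucl n → ℂ)

end

section Helpers

variable {n : ℕ}

/-- A modulated, dilated and translated copy of `φ`. -/
noncomputable def wave (φ : Eucl n → ℂ) (s : ℂ) (ε : ℝ) (y ξ₀ : Eucl n) (x : Eucl n) : ℂ :=
  s * (Complex.exp (Complex.I * ((inner ℝ x ξ₀ : ℝ) : ℂ)) * φ (ε • (x - y)))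

lemma integral_affine (G : Eucl n → ℂ) (ε : ℝ) (y : Eucl n) :
    ∫ x, G (ε • (x - y)) = |(ε ^ n)⁻¹| • ∫ z, G z := by
  rw [integral_sub_right_eq_self (fun x => G (ε • x)) y, Measure.integral_comp_smul]
  simp

lemma fourierInt_wave (φ : Eucl n → ℂ) (s : ℂ) {ε : ℝ} (hε : 0 < ε) (y ξ₀ ξ : Eucl n) :
    fourierInt (wave φ s ε y ξ₀) ξ =
      (|(ε ^ n)⁻¹| : ℝ) * (s * Complex.exp (-(Complex.I * ((inner ℝ y (ξ - ξ₀) : ℝ) : ℂ)))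
        * fourierInt φ (ε⁻¹ • (ξ - ξ₀))) := by
  have h := integral_affine (fun z => Complex.exp (-(Complex.I * ((inner ℝ (y + ε⁻¹ • z) ξ : ℝ) : ℂ)))
    * (s * (Complex.exp (Complex.I * ((inner ℝ (y + ε⁻¹ • z) ξ₀ : ℝ) : ℂ)) * φ z))) ε y
  have e : ∀ x : Eucl n, y + ε⁻¹ • ε • (x - y) = x := by
    intro x; rw [smul_smul, inv_mul_cancel₀ hε.ne', one_smul]; abel
  simp only [e] at h
  unfold fourierInt wave
  rw [h, Complex.real_smul]
  congr 1
  rw [← integral_const_mul]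
  congr 1
  ext z
  have : Complex.exp (-(Complex.I * ((inner ℝ (y + ε⁻¹ • z) ξ : ℝ) : ℂ))) *
      Complex.exp (Complex.I * ((inner ℝ (y + ε⁻¹ • z) ξ₀ : ℝ) : ℂ)) =
      Complex.exp (-(Complex.I * ((inner ℝ y (ξ - ξ₀) : ℝ) : ℂ))) *
      Complex.exp (-(Complex.I * ((inner ℝ z (ε⁻¹ • (ξ - ξ₀)) : ℝ) : ℂ))) := by
    rw [← Complex.exp_add, ← Complex.exp_add]
    congr 1
    simp only [inner_add_left, inner_sub_right, inner_smul_left, inner_smul_right]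
    push_cast
    simp
    ring
  linear_combination (s * φ z) * this

lemma fourierIntInv_wave (b φ : Eucl n → ℂ) (s : ℂ) {ε : ℝ} (hε : 0 < ε) (y ξ₀ x : Eucl n) :
    fourierIntInv (fun ξ => b ξ * fourierInt (wave φ s ε y ξ₀) ξ) x =
      wave (fourierIntInv (fun η => b (ξ₀ + ε • η) * fourierInt φ η)) s ε y ξ₀ x := by
  have h := integral_affine (fun η => Complex.exp (Complex.I * ((inner ℝ x (ξ₀ + ε • η) : ℝ) : ℂ))
    * (b (ξ₀ + ε • η) * ((|(ε ^ n)⁻¹| : ℝ) *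
      (s * Complex.exp (-(Complex.I * ((inner ℝ y (ε • η) : ℝ) : ℂ))) * fourierInt φ η)))) ε⁻¹ ξ₀
  have e : ∀ x : Eucl n, ε • ε⁻¹ • (x - ξ₀) = x - ξ₀ := by
    intro x; rw [smul_smul, mul_inv_cancel₀ hε.ne', one_smul]
  simp only [e, add_sub_cancel] at h
  unfold wave
  unfold fourierIntInv
  have e2 : ∀ ξ, fourierInt (fun x => s * (Complex.exp (Complex.I * ((inner ℝ x ξ₀ : ℝ) : ℂ)) *
    φ (ε • (x - y)))) ξ = _ := fun ξ => fourierInt_wave φ s hε y ξ₀ ξ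
  simp only [e2]
  rw [h, Complex.real_smul]
  simp only [smul_eq_mul]
  rw [← integral_const_mul, ← integral_const_mul, ← integral_const_mul, ← integral_const_mul,
    ← integral_const_mul]
  congr 1
  ext η
  have h1 : (((|(ε⁻¹ ^ n)⁻¹| : ℝ)) : ℂ) * ((|(ε ^ n)⁻¹| : ℝ) : ℂ) = 1 := by
    rw [← Complex.ofReal_mul, ← abs_mul, ← mul_inv, ← mul_pow, inv_mul_cancel₀ hε.ne']
    simp
  have h2 : Complex.exp (Complex.I * ((inner ℝ x (ξ₀ + ε • η) : ℝ) : ℂ)) *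
      Complex.exp (-(Complex.I * ((inner ℝ y (ε • η) : ℝ) : ℂ))) =
      Complex.exp (Complex.I * ((inner ℝ x ξ₀ : ℝ) : ℂ)) *
      Complex.exp (Complex.I * ((inner ℝ (ε • (x - y)) η : ℝ) : ℂ)) := by
    rw [← Complex.exp_add, ← Complex.exp_add]
    congr 1
    simp only [inner_add_right, inner_sub_left, inner_smul_left, inner_smul_right]
    push_cast
    simp
    ring
  set A := (((|(ε⁻¹ ^ n)⁻¹| : ℝ)) : ℂ)
  set B := ((|(ε ^ n)⁻¹| : ℝ) : ℂ)
  set P := (((2 * Real.pi) ^ n : ℝ)⁻¹ : ℂ)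
  linear_combination (P * A * B * b (ξ₀ + ε • η) * s * fourierInt φ η) * h2 +
    (P * b (ξ₀ + ε • η) * s * fourierInt φ η *
    (Complex.exp (Complex.I * ((inner ℝ x ξ₀ : ℝ) : ℂ)) *
      Complex.exp (Complex.I * ((inner ℝ (ε • (x - y)) η : ℝ) : ℂ)))) * h1

lemma norm_exp_I (t : ℝ) : ‖Complex.exp (Complex.I * (t : ℂ))‖ = 1 := by
  rw [mul_comm]; exact Complex.norm_exp_ofReal_mul_I t

lemma norm_exp_neg_I (t : ℝ) : ‖Complex.exp (-(Complex.I * (t : ℂ)))‖ = 1 := by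
  have := norm_exp_I (-t)
  rwa [Complex.ofReal_neg, mul_neg] at this

lemma eLpNorm_affine (f : Eucl n → ℂ) {ε : ℝ} (hε : 0 < ε) (y : Eucl n) (p : ℝ≥0∞) :
    eLpNorm (fun x => f (ε • (x - y))) p volume =
      (ENNReal.ofReal |(ε ^ n)⁻¹|) ^ (1 / p).toReal * eLpNorm f p volume := by
  have hc : ENNReal.ofReal |(ε ^ n)⁻¹| ≠ 0 := by
    simp only [ne_eq, ENNReal.ofReal_eq_zero, not_le]; positivity
  have e1 : MeasurableEmbedding (fun x : Eucl n => ε • x) :=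
    (Homeomorph.smulOfNeZero ε hε.ne').measurableEmbedding
  have e2 : MeasurableEmbedding (fun x : Eucl n => x - y) :=
    (Homeomorph.subRight y).measurableEmbedding
  have h1 := e2.eLpNorm_map_measure (g := fun x => f (ε • x)) (p := p) (μ := volume)
  have h2 := e1.eLpNorm_map_measure (g := f) (p := p) (μ := volume)
  rw [map_sub_right_eq_self] at h1
  rw [Measure.map_addHaar_smul _ hε.ne', finrank_euclideanSpace_fin,
    eLpNorm_smul_measure_of_ne_zero hc] at h2
  rw [← smul_eq_mul, h2]
  exact h1.symm

lemma eLpNorm_wave (f : Eucl n → ℂ) (s : ℂ) {ε : ℝ} (hε : 0 < ε) (y ξ₀ : Eucl n) (p : ℝ≥0∞) :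
    eLpNorm (wave f s ε y ξ₀) p volume =
      ‖s‖ₑ * ((ENNReal.ofReal |(ε ^ n)⁻¹|) ^ (1 / p).toReal * eLpNorm f p volume) := by
  rw [← eLpNorm_affine f hε y p, ← eLpNorm_const_smul]
  apply eLpNorm_congr_norm_ae
  filter_upwards with x
  simp [wave]

lemma wave_aesm {f : Eucl n → ℂ} (hf : Continuous f) (s : ℂ) (ε : ℝ) (y ξ₀ : Eucl n) :
    Continuous (wave f s ε y ξ₀) := by
  unfold wave
  fun_prop

lemma T_explicit (FP : FourierPlancherelPair n) (a : Eucl n → ℂ)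
    (ha : MemLp a ⊤ (volume : Measure (Eucl n))) (b : Eucl n → ℂ) (hb : Measurable b) (C : ℝ)
    (hC : ∀ x, ‖b x‖ ≤ C) (hab : a =ᵐ[volume] b) (u : Eucl n → ℂ) (hu : Integrable u)
    (hu2 : MemLp u 2 (volume : Measure (Eucl n))) (hF : Integrable (fourierInt u)) :
    (FP.Finv (mulOp a ha (FP.F (hu2.toLp u))) : Eucl n → ℂ) =ᵐ[volume]
      fourierIntInv (fun ξ => b ξ * fourierInt u ξ) := by
  have h1 := FP.F_int u hu hu2
  have h2 : (mulOp a ha (FP.F (hu2.toLp u)) : Eucl n → ℂ) =ᵐ[volume]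
      (fun ξ => b ξ * fourierInt u ξ) := by
    refine (MemLp.coeFn_toLp _).trans ?_
    filter_upwards [h1, hab] with x h1 h2
    simp [h1, h2]
  have hm : MemLp (fun ξ => b ξ * fourierInt u ξ) 2 volume := (memLp_congr_ae h2).1 (Lp.memLp _)
  have hi : Integrable (fun ξ => b ξ * fourierInt u ξ) :=
    hF.bdd_mul hb.aestronglyMeasurable (Eventually.of_forall hC)
  have h3 : mulOp a ha (FP.F (hu2.toLp u)) = hm.toLp _ :=
    Lp.ext (h2.trans (MemLp.coeFn_toLp hm).symm)
  rw [h3]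
  exact FP.Finv_int _ hi hm

lemma inversion (FP : FourierPlancherelPair n) (u : Eucl n → ℂ) (hu : Integrable u)
    (hu2 : MemLp u 2 (volume : Measure (Eucl n))) (hF : Integrable (fourierInt u)) :
    fourierIntInv (fourierInt u) =ᵐ[volume] u := by
  have h1 := FP.F_int u hu hu2
  have hm : MemLp (fourierInt u) 2 volume := (memLp_congr_ae h1).1 (Lp.memLp _)
  have h3 : FP.F (hu2.toLp u) = hm.toLp _ :=
    Lp.ext (h1.trans (MemLp.coeFn_toLp hm).symm)
  have h4 := FP.Finv_int _ hF hm
  rw [← h3, FP.inv_comp] at h4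
  exact h4.symm.trans (MemLp.coeFn_toLp hu2)

lemma continuous_fourierIntInv {f : Eucl n → ℂ} (hf : Integrable f) :
    Continuous (fourierIntInv f) := by
  unfold fourierIntInv
  refine Continuous.const_smul (M := ℂ) (α := ℂ) ?_ _
  refine continuous_of_dominated (bound := fun ξ => ‖f ξ‖) ?_ ?_ hf.norm ?_
  · intro x
    refine AEStronglyMeasurable.mul (Continuous.aestronglyMeasurable ?_) hf.1
    fun_prop
  · intro x
    filter_upwards with ξ
    rw [norm_mul, norm_exp_I, one_mul]
  · filter_upwards with ξ
    fun_prop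

lemma norm_fourierInt_le (u : Eucl n → ℂ) (ξ : Eucl n) : ‖fourierInt u ξ‖ ≤ ∫ x, ‖u x‖ := by
  unfold fourierInt
  refine (norm_integral_le_integral_norm _).trans (le_of_eq ?_)
  congr 1
  ext x
  rw [norm_mul, norm_exp_neg_I, one_mul]

lemma integrable_fourierInt_schwartz (φ : SchwartzMap (Eucl n) ℂ) :
    Integrable (fourierInt (φ : Eucl n → ℂ)) := by
  have h := (FourierTransform.fourier φ).integrable (μ := volume)
  have h2 := h.comp_smul (R := (2 * Real.pi)⁻¹) (by positivity)
  convert h2 using 1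
  ext ξ
  rw [SchwartzMap.fourier_coe, Real.fourier_eq']
  unfold fourierInt
  congr 1
  ext x
  rw [smul_eq_mul]
  congr 2
  rw [inner_smul_right]
  have : -2 * Real.pi * ((2 * Real.pi)⁻¹ * inner ℝ x ξ) = - inner ℝ x ξ := by
    field_simp
  rw [this]
  push_cast
  ring

lemma exists_bump (n : ℕ) : ∃ φ : Eucl n → ℂ, φ 0 = 1 ∧
    (∀ x, φ x ≠ 0 → x ∈ Metric.ball (0 : Eucl n) 1) ∧ Continuous φ ∧
    (∀ q : ℝ≥0∞, MemLp φ q volume) ∧ Integrable (fourierInt φ) := by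
  let f : ContDiffBump (0 : Eucl n) := ⟨1/2, 1, by norm_num, by norm_num⟩
  have h1 : ContDiff ℝ (↑(⊤ : ℕ∞)) (fun x => ((f x : ℝ) : ℂ)) :=
    Complex.ofRealCLM.contDiff.comp f.contDiff
  have h2 : HasCompactSupport (fun x => ((f x : ℝ) : ℂ)) :=
    f.hasCompactSupport.comp_left (g := fun t : ℝ => (t : ℂ)) (by simp)
  refine ⟨fun x => ((f x : ℝ) : ℂ), ?_, ?_, h1.continuous,
    fun q => h1.continuous.memLp_of_hasCompactSupport h2,
    integrable_fourierInt_schwartz (h2.toSchwartzMap h1)⟩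
  · show ((f 0 : ℝ) : ℂ) = 1
    rw [f.one_of_mem_closedBall] <;> simp [f]
  · intro x hx
    have hx' : ((f x : ℝ) : ℂ) ≠ 0 := hx
    have : x ∈ Function.support f := by
      simpa using hx'
    rwa [f.support_eq] at this

end Helpers

lemma lebesgue_kernel {n : ℕ} (b : Eucl n → ℂ) (hb : Measurable b) (C : ℝ)
    (hC : ∀ x, ‖b x‖ ≤ C) (w : Eucl n → ℝ) (hw : Integrable w) (D : ℝ) (hw0 : ∀ x, 0 ≤ w x)
    (hD : ∀ x, w x ≤ D) : ∀ᵐ ξ₀ : Eucl n, ∀ ε : ℕ → ℝ, (∀ k, 0 < ε k) →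
      Tendsto ε atTop (nhds 0) →
      Tendsto (fun k => ∫ η, ‖b (ξ₀ + ε k • η) - b ξ₀‖ * w η) atTop (nhds 0) := by
  have hloc : LocallyIntegrable b := by
    have : MemLp b ⊤ volume := memLp_top_of_bound hb.aestronglyMeasurable C (Eventually.of_forall hC)
    exact this.locallyIntegrable le_top
  have hC0 : 0 ≤ C := (norm_nonneg _).trans (hC 0)
  have hD0 : 0 ≤ D := (hw0 0).trans (hD 0)
  filter_upwards [IsUnifLocDoublingMeasure.ae_tendsto_average_norm_sub volume hloc 1] with ξ₀ hξ ε hε hε0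
  have hm : ∀ k, Measurable (fun η => ‖b (ξ₀ + ε k • η) - b ξ₀‖) := by
    intro k; fun_prop
  have hbd : ∀ k η, ‖b (ξ₀ + ε k • η) - b ξ₀‖ ≤ 2 * C := by
    intro k η
    refine (norm_sub_le _ _).trans ?_
    linarith [hC (ξ₀ + ε k • η), hC ξ₀]
  have hint : ∀ k, Integrable (fun η => ‖b (ξ₀ + ε k • η) - b ξ₀‖ * w η) := fun k =>
    hw.bdd_mul (c := 2 * C) (hm k).aestronglyMeasurable (Eventually.of_forall fun η => by
      rw [norm_norm]; exact hbd k η)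
  have hnn : ∀ k, 0 ≤ ∫ η, ‖b (ξ₀ + ε k • η) - b ξ₀‖ * w η := fun k =>
    integral_nonneg fun η => mul_nonneg (norm_nonneg _) (hw0 η)
  -- local part
  have hlocal : ∀ L : ℝ, 0 < L → Tendsto (fun k => ∫ η in Metric.closedBall (0 : Eucl n) L,
      ‖b (ξ₀ + ε k • η) - b ξ₀‖) atTop (nhds 0) := by
    intro L hL
    have h1 := hξ (ι := ℕ) (l := atTop) (fun _ => ξ₀) (fun k => ε k * L) (by
      refine tendsto_nhdsWithin_iff.2 ⟨by simpa using hε0.mul_const L, ?_⟩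
      exact Eventually.of_forall fun k => mul_pos (hε k) hL) (by
      refine Eventually.of_forall fun k => ?_
      apply Metric.mem_closedBall_self
      have := mul_pos (hε k) hL
      linarith)
    have h2 := h1.const_mul (L ^ n * (volume (Metric.ball (0 : Eucl n) 1)).toReal)
    rw [mul_zero] at h2
    refine h2.congr fun k => ?_
    rw [setAverage_eq]
    have h3 := Measure.setIntegral_comp_smul (volume : Measure (Eucl n))
      (fun η => ‖b (ξ₀ + η) - b ξ₀‖) (Metric.closedBall (0 : Eucl n) L) (hε k).ne'
    rw [h3, smul_closedBall _ _ hL.le, smul_zero, finrank_euclideanSpace_fin]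
    have h4 : ∫ x in Metric.closedBall (0 : Eucl n) (‖ε k‖ * L), ‖b (ξ₀ + x) - b ξ₀‖ =
        ∫ x in Metric.closedBall ξ₀ (ε k * L), ‖b x - b ξ₀‖ := by
      have := (measurePreserving_add_left (volume : Measure (Eucl n)) ξ₀).setIntegral_preimage_emb
        (Homeomorph.addLeft ξ₀).measurableEmbedding (fun x => ‖b x - b ξ₀‖)
        (Metric.closedBall ξ₀ (ε k * L))
      rw [← this]
      congr 2
      rw [Real.norm_of_nonneg (hε k).le]
      ext x
      simp [dist_eq_norm]
    rw [h4, Measure.real, Measure.addHaar_closedBall _ _ (mul_pos (hε k) hL).le,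
      finrank_euclideanSpace_fin, ENNReal.toReal_mul,
      ENNReal.toReal_ofReal (by have := hε k; positivity), abs_of_pos (by have := hε k; positivity)]
    have hv : (volume (Metric.ball (0 : Eucl n) 1)).toReal ≠ 0 :=
      (ENNReal.toReal_pos (Metric.measure_ball_pos _ _ one_pos).ne' measure_ball_lt_top.ne).ne'
    have := (hε k).ne'
    simp only [smul_eq_mul]
    field_simp
    ring
  -- tail
  have htail : Tendsto (fun i : ℕ => ∫ x in (Metric.closedBall (0 : Eucl n) i)ᶜ, w x) atTop
      (nhds 0) := by
    have h := tendsto_setIntegral_of_antitone (μ := (volume : Measure (Eucl n))) (f := w)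
      (s := fun i : ℕ => (Metric.closedBall (0 : Eucl n) i)ᶜ)
      (fun i => Metric.isClosed_closedBall.measurableSet.compl)
      (fun i j hij => Set.compl_subset_compl.2 (Metric.closedBall_subset_closedBall (by exact_mod_cast hij)))
      ⟨0, hw.integrableOn⟩
    have he : (⋂ i : ℕ, (Metric.closedBall (0 : Eucl n) i)ᶜ) = ∅ := by
      rw [← Set.compl_iUnion, Metric.iUnion_closedBall_nat, Set.compl_univ]
    rwa [he, setIntegral_empty] at h
  rw [Metric.tendsto_atTop]
  intro δ hδ
  have hδ' : 0 < δ / (2 * (2 * C + 1)) := by positivity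
  obtain ⟨N, hN⟩ := (Metric.tendsto_atTop.1 htail) _ hδ'
  have hN1 := hN (N + 1) (by omega)
  have hδ2 : 0 < δ / (2 * (D + 1)) := by positivity
  obtain ⟨N', hN'⟩ := (Metric.tendsto_atTop.1 (hlocal ((N + 1 : ℕ) : ℝ) (by positivity))) _ hδ2
  refine ⟨N', fun k hk => ?_⟩
  have hk1 := hN' k hk
  rw [Real.dist_eq, sub_zero] at hN1 hk1 ⊢
  have hN2 := (abs_lt.1 hN1).2
  have hk2 := (abs_lt.1 hk1).2
  rw [abs_of_nonneg (hnn k)]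
  set S := Metric.closedBall (0 : Eucl n) ((N + 1 : ℕ) : ℝ) with hS
  have hSm : MeasurableSet S := Metric.isClosed_closedBall.measurableSet
  rw [← integral_add_compl hSm (hint k)]
  have p1 : ∫ η in S, ‖b (ξ₀ + ε k • η) - b ξ₀‖ * w η ≤
      D * ∫ η in S, ‖b (ξ₀ + ε k • η) - b ξ₀‖ := by
    rw [← integral_const_mul]
    refine integral_mono (hint k).integrableOn ?_ fun η => ?_
    · refine Integrable.const_mul ?_ _
      refine Measure.integrableOn_of_bounded (M := 2 * C) measure_closedBall_lt_top.ne
        (hm k).aestronglyMeasurable (Eventually.of_forall fun η => ?_)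
      rw [norm_norm]; exact hbd k η
    · show _ * w η ≤ D * _
      rw [mul_comm]
      exact mul_le_mul_of_nonneg_right (hD η) (norm_nonneg _)
  have p2 : ∫ η in Sᶜ, ‖b (ξ₀ + ε k • η) - b ξ₀‖ * w η ≤ 2 * C * ∫ η in Sᶜ, w η := by
    rw [← integral_const_mul]
    refine integral_mono (hint k).integrableOn (hw.integrableOn.const_mul _) fun η => ?_
    exact mul_le_mul_of_nonneg_right (hbd k η) (hw0 η)
  have q1 : D * ∫ η in S, ‖b (ξ₀ + ε k • η) - b ξ₀‖ ≤ D * (δ / (2 * (D + 1))) :=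
    mul_le_mul_of_nonneg_left hk2.le hD0
  have q2 : 2 * C * ∫ η in Sᶜ, w η ≤ 2 * C * (δ / (2 * (2 * C + 1))) :=
    mul_le_mul_of_nonneg_left hN2.le (by positivity)
  have r1 : D * (δ / (2 * (D + 1))) < δ / 2 := by
    rw [mul_div_assoc', div_lt_div_iff₀ (by positivity) (by positivity)]; nlinarith
  have r2 : 2 * C * (δ / (2 * (2 * C + 1))) < δ / 2 := by
    rw [mul_div_assoc', div_lt_div_iff₀ (by positivity) (by positivity)]; nlinarith
  linarith

lemma scale_bound {n : ℕ} (p : ℝ≥0∞) (Ω : Set (Eucl n))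
    (a : Eucl n → ℂ) (ha : MemLp a ⊤ (volume : Measure (Eucl n)))
    (FP : FourierPlancherelPair n) (K : ℝ≥0∞)
    (hK : ∀ (u : Eucl n → ℂ) (hu2 : MemLp (Ω.indicator u) 2 (volume : Measure (Eucl n))),
      MemLp (Ω.indicator u) p volume → eLpNorm (Ω.indicator u) p volume ≤ 1 →
      eLpNorm (WOp FP a ha Ω u hu2) p volume ≤ K)
    (b : Eucl n → ℂ) (hb : Measurable b) (C : ℝ) (hC : ∀ x, ‖b x‖ ≤ C) (hab : a =ᵐ[volume] b)
    (φ : Eucl n → ℂ) (hφc : Continuous φ)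
    (hφs : ∀ x, φ x ≠ 0 → x ∈ Metric.ball (0 : Eucl n) 1)
    (hφq : ∀ q : ℝ≥0∞, eLpNorm φ q volume < ⊤) (hFi : Integrable (fourierInt φ))
    (N : ℝ≥0∞) (hN : N = eLpNorm φ p volume) (hN0 : N ≠ 0) (hNt : N ≠ ⊤)
    (ξ₀ y : Eucl n) (ε r : ℝ) (hε : 0 < ε) (hr : 1 ≤ r) (hy : Metric.ball y (r / ε) ⊆ Ω) :
    eLpNorm ((Metric.ball (0 : Eucl n) r).indicator
      (fourierIntInv (fun η => b (ξ₀ + ε • η) * fourierInt φ η))) p volume ≤ K * N := by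
  have hin : ∀ x, ε • (x - y) ∈ Metric.ball (0 : Eucl n) r → x ∈ Ω := by
    intro x hx
    apply hy
    rw [mem_ball_zero_iff, norm_smul, Real.norm_of_nonneg hε.le] at hx
    rw [Metric.mem_ball, dist_eq_norm, lt_div_iff₀ hε, mul_comm]
    exact hx
  set c : ℝ≥0∞ := (ENNReal.ofReal |(ε ^ n)⁻¹|) ^ (1 / p).toReal with hc
  have hcpos : 0 < |(ε ^ n)⁻¹| := by have := hε; positivity
  have hc0 : c ≠ 0 := by
    rw [hc]
    exact (ENNReal.rpow_pos (ENNReal.ofReal_pos.2 hcpos) ENNReal.ofReal_ne_top).ne'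
  have hct : c ≠ ⊤ := ENNReal.rpow_ne_top_of_nonneg ENNReal.toReal_nonneg ENNReal.ofReal_ne_top
  have hcN0 : c * N ≠ 0 := mul_ne_zero hc0 hN0
  have hcNt : c * N ≠ ⊤ := ENNReal.mul_ne_top hct hNt
  set s : ℂ := (((c * N)⁻¹.toReal : ℝ) : ℂ) with hs
  have hse : ‖s‖ₑ = (c * N)⁻¹ := by
    rw [← ofReal_norm, hs, Complex.norm_real, Real.norm_of_nonneg ENNReal.toReal_nonneg,
      ENNReal.ofReal_toReal (ENNReal.inv_ne_top.2 hcN0)]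
  set u := wave (φ : Eucl n → ℂ) s (ε) y ξ₀ with hu
  have hun : ∀ q : ℝ≥0∞, MemLp u q volume := by
    intro q
    refine ⟨(wave_aesm hφc _ _ _ _).aestronglyMeasurable, ?_⟩
    rw [hu, eLpNorm_wave _ _ hε]
    refine ENNReal.mul_lt_top enorm_lt_top (ENNReal.mul_lt_top ?_ (hφq q))
    exact (ENNReal.rpow_ne_top_of_nonneg ENNReal.toReal_nonneg ENNReal.ofReal_ne_top).lt_top
  have huΩ : Ω.indicator u = u := by
    rw [Set.indicator_eq_self]
    intro x hx
    apply hin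
    have h1 : φ (ε • (x - y)) ≠ 0 := by
      intro h
      apply hx
      simp [hu, wave, h]
    refine Metric.ball_subset_ball ?_ (hφs _ h1)
    exact hr
  have hu2 : MemLp (Ω.indicator u) 2 volume := by rw [huΩ]; exact hun 2
  have hui : Integrable (Ω.indicator u) := by
    rw [huΩ]; exact memLp_one_iff_integrable.1 (hun 1)
  have hFu : Integrable (fourierInt (Ω.indicator u)) := by
    rw [huΩ]
    have e : fourierInt u = fun ξ => _ := funext fun ξ => fourierInt_wave φ s hε y ξ₀ ξ
    rw [e]
    refine Integrable.const_mul ?_ _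
    refine Integrable.bdd_mul (c := ‖s‖) ?_ ?_ ?_
    · exact (hFi.comp_smul (inv_ne_zero hε.ne')).comp_sub_right ξ₀
    · refine Continuous.aestronglyMeasurable ?_
      fun_prop
    · refine Eventually.of_forall fun ξ => ?_
      rw [norm_mul, norm_exp_neg_I, mul_one]
  have hT := T_explicit FP a ha b hb C hC hab (Ω.indicator u) hui hu2 hFu
  have hup : eLpNorm (Ω.indicator u) p volume ≤ 1 := by
    rw [huΩ, hu, eLpNorm_wave _ _ hε, hse]
    rw [← hN]
    exact (ENNReal.inv_mul_cancel hcN0 hcNt).le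
  have hle : eLpNorm (WOp FP a ha Ω u hu2) p volume ≤ K :=
    hK u hu2 (by rw [huΩ]; exact hun p) hup
  have hle2 : eLpNorm (wave ((Metric.ball (0 : Eucl n) r).indicator (fourierIntInv (fun η => b (ξ₀ + ε • η) * fourierInt φ η))) s (ε) y ξ₀) p volume ≤
      eLpNorm (WOp FP a ha Ω u hu2) p volume := by
    apply eLpNorm_mono_ae
    filter_upwards [hT] with x hx
    have e0 : fourierIntInv (fun ξ => b ξ * fourierInt (Ω.indicator u) ξ) x =
        wave (fourierIntInv (fun η => b (ξ₀ + ε • η) * fourierInt φ η)) s ε y ξ₀ x := by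
      rw [huΩ]; exact fourierIntInv_wave b φ s hε y ξ₀ x
    rw [e0] at hx
    by_cases hxB : ε • (x - y) ∈ Metric.ball (0 : Eucl n) r
    · have e1 : WOp FP a ha Ω u hu2 x = wave (fourierIntInv (fun η => b (ξ₀ + ε • η) * fourierInt φ η)) s (ε) y ξ₀ x := by
        unfold WOp
        rw [Set.indicator_of_mem (hin x hxB)]
        exact hx
      rw [e1]
      simp only [wave, Set.indicator_of_mem hxB, le_refl]
    · simp only [wave, Set.indicator_of_notMem hxB, mul_zero, norm_zero, norm_nonneg]
  set Z := eLpNorm ((Metric.ball (0 : Eucl n) r).indicator (fourierIntInv (fun η => b (ξ₀ + ε • η) * fourierInt φ η))) p volume with hZ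
  have h5 := hle2.trans hle
  rw [eLpNorm_wave _ _ hε, hse, ← hc, ← hZ,
    ENNReal.mul_inv (Or.inl hc0) (Or.inl hct)] at h5
  have h6 : c⁻¹ * N⁻¹ * (c * Z) = N⁻¹ * Z := by
    calc _ = (c⁻¹ * c) * (N⁻¹ * Z) := by ring
      _ = _ := by rw [ENNReal.inv_mul_cancel hc0 hct, one_mul]
  rw [h6] at h5
  calc Z = N * (N⁻¹ * Z) := by
        rw [← mul_assoc, ENNReal.mul_inv_cancel hN0 hNt, one_mul]
    _ ≤ N * K := by gcongr
    _ = K * N := mul_comm _ _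

/-- lower bound for the norm of a Wiener–Hopf type operator on `L^p(Ω)`
when `Ω` contains balls of arbitrarily large radius. -/
theorem norm_lower_bound (n : ℕ) (hn : 1 ≤ n) (p : ℝ≥0∞) (hp1 : 1 ≤ p) (hp : p ≠ ∞)
    (Ω : Set (Eucl n)) (hΩ : MeasurableSet Ω)
    (hballs : ∀ R : ℝ, 0 < R → ∃ y : Eucl n, Metric.ball y R ⊆ Ω)
    (a : Eucl n → ℂ) (ha : MemLp a ⊤ (volume : Measure (Eucl n)))
    (FP : FourierPlancherelPair n) (M : ℝ) (hM0 : 0 ≤ M)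
    (hM : ∀ (u : Eucl n → ℂ) (hu2 : MemLp u 2 (volume : Measure (Eucl n))),
      MemLp u p volume →
      eLpNorm (FP.Finv (mulOp a ha (FP.F (hu2.toLp u))) : Eucl n → ℂ) p volume
        ≤ ENNReal.ofReal M * eLpNorm u p volume) :
    eLpNorm a ⊤ volume ≤
      sSup { t : ℝ≥0∞ |
        ∃ (u : Eucl n → ℂ) (hu2 : MemLp (Ω.indicator u) 2 (volume : Measure (Eucl n))),
          MemLp (Ω.indicator u) p volume ∧ eLpNorm (Ω.indicator u) p volume ≤ 1 ∧
          t = eLpNorm (WOp FP a ha Ω u hu2) p volume } := by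
  obtain ⟨φ, hφ0, hφs, hφc, hφm, hFi⟩ := exists_bump n
  -- a bounded measurable representative of `a`
  obtain ⟨b, hb, C, hC, hab⟩ : ∃ b : Eucl n → ℂ, Measurable b ∧ ∃ C : ℝ, (∀ x, ‖b x‖ ≤ C) ∧
      a =ᵐ[volume] b := by
    have hm : StronglyMeasurable (ha.1.mk a) := ha.1.stronglyMeasurable_mk
    set C := (eLpNorm a ⊤ volume).toReal
    refine ⟨{x | ‖ha.1.mk a x‖ ≤ C}.indicator (ha.1.mk a), ?_, C, ?_, ?_⟩
    · exact hm.measurable.indicator (measurableSet_le hm.norm.measurable measurable_const)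
    · intro x
      by_cases hx : x ∈ {x | ‖ha.1.mk a x‖ ≤ C}
      · rw [Set.indicator_of_mem hx]; exact hx
      · rw [Set.indicator_of_notMem hx, norm_zero]; exact ENNReal.toReal_nonneg
    · have h1 : ∀ᵐ x, ‖a x‖ₑ ≤ eLpNorm a ⊤ volume := by
        rw [eLpNorm_exponent_top]
        exact enorm_ae_le_eLpNormEssSup a volume
      filter_upwards [h1, ha.1.ae_eq_mk] with x h1 h2
      rw [Set.indicator_of_mem, h2]
      show ‖_‖ ≤ C
      rw [← h2, ← toReal_enorm]
      exact ENNReal.toReal_mono ha.2.ne h1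
  have hφi : Integrable φ := memLp_one_iff_integrable.1 (hφm 1)
  have hφq : ∀ q : ℝ≥0∞, eLpNorm φ q volume < ⊤ := fun q => (hφm q).2
  have hφ2 : MemLp φ 2 volume := hφm 2
  have hφp : MemLp φ p volume := hφm p
  have hp0 : p ≠ 0 := (zero_lt_one.trans_le hp1).ne'
  set N := eLpNorm φ p volume with hN
  have hNt : N ≠ ⊤ := hφp.2.ne
  have hN0 : N ≠ 0 := by
    intro h
    have h1 := (eLpNorm_eq_zero_iff hφp.1 hp0).1 h
    have h2 := (Continuous.ae_eq_iff_eq volume hφc continuous_const).1 h1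
    have h3 := congrFun h2 0
    rw [hφ0] at h3
    exact one_ne_zero h3
  set K := sSup { t : ℝ≥0∞ |
        ∃ (u : Eucl n → ℂ) (hu2 : MemLp (Ω.indicator u) 2 (volume : Measure (Eucl n))),
          MemLp (Ω.indicator u) p volume ∧ eLpNorm (Ω.indicator u) p volume ≤ 1 ∧
          t = eLpNorm (WOp FP a ha Ω u hu2) p volume } with hK
  rw [eLpNorm_exponent_top]
  apply eLpNormEssSup_le_of_ae_enorm_bound
  filter_upwards [hab, lebesgue_kernel b hb C hC (fun η => ‖fourierInt φ η‖) hFi.norm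
    (∫ x, ‖φ x‖) (fun _ => norm_nonneg _) (norm_fourierInt_le φ)] with ξ₀ hξa hker
  rw [hξa]
  -- the scales
  obtain ⟨ε, hε, hε0⟩ : ∃ ε : ℕ → ℝ, (∀ k, 0 < ε k) ∧ Tendsto ε atTop (nhds 0) :=
    ⟨fun k => 1 / ((k : ℝ) + 1), fun k => by positivity, tendsto_one_div_add_atTop_nhds_zero_nat⟩
  have hker := hker ε hε hε0
  let g : ℕ → Eucl n → ℂ := fun k => fourierIntInv (fun η => b (ξ₀ + ε k • η) * fourierInt φ η)
  have hgi : ∀ k, Integrable (fun η => b (ξ₀ + ε k • η) * fourierInt φ η) := fun k =>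
    hFi.bdd_mul (c := C) (Measurable.aestronglyMeasurable (by fun_prop))
      (Eventually.of_forall fun η => hC _)
  have hgc : ∀ k, Continuous (g k) := fun k => continuous_fourierIntInv (hgi k)
  let gB : ℕ → Eucl n → ℂ := fun k => (Metric.ball (0 : Eucl n) ((k : ℝ) + 1)).indicator (g k)
  -- the bound for each scale
  have hbound : ∀ k, eLpNorm (gB k) p volume ≤ K * N := by
    intro k
    obtain ⟨y, hy⟩ := hballs (((k : ℝ) + 1) / ε k) (by have := hε k; positivity)
    refine scale_bound p Ω a ha FP K (fun u hu2 h1 h2 => le_sSup ⟨u, hu2, h1, h2, rfl⟩) b hb C hC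
      hab φ hφc hφs hφq hFi N hN hN0 hNt ξ₀ y (ε k) _ (hε k) ?_ hy
    have : (0 : ℝ) ≤ k := Nat.cast_nonneg k
    linarith
  -- pointwise convergence
  have hlim : ∀ᵐ x : Eucl n, Tendsto (fun k => gB k x) atTop (nhds (b ξ₀ * φ x)) := by
    filter_upwards [inversion FP φ hφi hφ2 hFi] with x hx
    have h1 : Tendsto (fun k => g k x) atTop (nhds (b ξ₀ * φ x)) := by
      rw [tendsto_iff_norm_sub_tendsto_zero]
      have h2 := hker.const_mul ‖(((2 * Real.pi) ^ n : ℝ)⁻¹ : ℂ)‖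
      rw [mul_zero] at h2
      refine squeeze_zero (fun _ => norm_nonneg _) (fun k => ?_) h2
      have hexp : ∀ f : Eucl n → ℂ, Integrable f → Integrable
          (fun ξ => Complex.exp (Complex.I * ((inner ℝ x ξ : ℝ) : ℂ)) * f ξ) := fun f hf =>
        hf.bdd_mul (c := 1) (Continuous.aestronglyMeasurable (by fun_prop))
          (Eventually.of_forall fun ξ => (norm_exp_I _).le)
      rw [← hx]
      simp only [g, fourierIntInv, smul_eq_mul]
      rw [mul_left_comm, ← mul_sub, norm_mul]
      refine mul_le_mul_of_nonneg_left ?_ (norm_nonneg _)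
      rw [← integral_const_mul, ← integral_sub (hexp _ (hgi k)) ((hexp _ hFi).const_mul _)]
      refine (norm_integral_le_integral_norm _).trans (le_of_eq ?_)
      congr 1
      ext η
      rw [← norm_mul, ← one_mul ‖_ * fourierInt _ _‖,
        ← norm_exp_I (inner ℝ x η), ← norm_mul]
      congr 1
      ring
    refine h1.congr' ?_
    obtain ⟨m, hm⟩ := exists_nat_gt ‖x‖
    filter_upwards [eventually_ge_atTop m] with k hk
    have : x ∈ Metric.ball (0 : Eucl n) ((k : ℝ) + 1) := by
      rw [mem_ball_zero_iff]
      have : (m : ℝ) ≤ k := by exact_mod_cast hk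
      linarith
    simp only [gB, Set.indicator_of_mem this]
  have hfatou := Lp.eLpNorm_lim_le_liminf_eLpNorm (p := p) (f := gB) (μ := volume)
    (fun k => ((hgc k).aestronglyMeasurable).indicator Metric.isOpen_ball.measurableSet) _ hlim
  have hfin : eLpNorm (fun x => b ξ₀ * φ x) p volume ≤ K * N :=
    hfatou.trans (liminf_le_of_frequently_le' (Frequently.of_forall hbound))
  have e : eLpNorm (fun x => b ξ₀ * φ x) p volume = ‖b ξ₀‖ₑ * N :=
    eLpNorm_const_smul (b ξ₀) φ p volume
  rw [e] at hfin
  exact (ENNReal.mul_le_mul_iff_left hN0 hNt).1 hfin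
end

section
/- Let n ≥ 1, 1 < p < ∞, and let w be a weight on ℝⁿ satisfying the Berezhnoi–Muckenhoupt condition for exponent p. Then for every nonempty open cone C ⊆ ℝⁿ with vertex at the origin there exist τ > 1, a constant A ∈ (0,∞), points y_j ∈ C and radii R_j strictly increasing to ∞ such that B(y_j, τR_j) ⊆ C for all j, B(y_j, τR_j) ∩ B(y_k, τR_k) = ∅ for j ≠ k, and (∫_{B(y_j,τR_j)} w(x)^p dx)^{1/p} ≤ A · (∫_{B(y_j,R_j)} w(x)^p dx)^{1/p} for all j ∈ ℕ. -/
open MeasureTheory Filter Metric ENNReal NNReal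

noncomputable section

/-- The Berezhnoi–Muckenhoupt condition for a weight `w : ℝⁿ → [0,∞]` and an exponent
`p ∈ (1,∞)` with conjugate exponent `q`:
`sup_B |B|⁻¹ (∫_B w^p)^{1/p} (∫_B w^{-q})^{1/q} < ∞`, the supremum being over all balls. -/
def BMCondition {n : ℕ} (w : Eucl n → ℝ≥0∞) (p q : ℝ) : Prop :=
  ∃ K : ℝ≥0∞, K ≠ ∞ ∧ ∀ (y : Eucl n) (r : ℝ), 0 < r →
    (volume (ball y r))⁻¹ * (∫⁻ x in ball y r, w x ^ p) ^ (1 / p) *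
      (∫⁻ x in ball y r, (w x)⁻¹ ^ q) ^ (1 / q) ≤ K

lemma bm_doubling_aux (n : ℕ) (hn : 1 ≤ n) (p q : ℝ) (hp : 1 < p)
    (hpq : 1 / p + 1 / q = 1) (w : Eucl n → ℝ≥0∞) (hwmeas : Measurable w)
    (hw : ∀ᵐ x : Eucl n, 0 < w x ∧ w x < ∞) (K : ℝ≥0∞)
    (hK : ∀ (y : Eucl n) (r : ℝ), 0 < r →
    (volume (ball y r))⁻¹ * (∫⁻ x in ball y r, w x ^ p) ^ (1 / p) *
      (∫⁻ x in ball y r, (w x)⁻¹ ^ q) ^ (1 / q) ≤ K) (y : Eucl n) (r : ℝ) (hr : 0 < r) :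
    (∫⁻ x in ball y (2 * r), w x ^ p) ^ (1 / p)
      ≤ (K * 2 ^ n + 1) * (∫⁻ x in ball y r, w x ^ p) ^ (1 / p) := by
  have hc : p.HolderConjugate q := by
    rw [Real.holderConjugate_iff]
    exact ⟨hp, by simpa [one_div] using hpq⟩
  have hq : 0 < q := hc.symm.pos
  have hH : volume (ball y r) ≤ (∫⁻ x in ball y r, w x ^ p) ^ (1 / p) *
      (∫⁻ x in ball y r, (w x)⁻¹ ^ q) ^ (1 / q) := by
    have h1 := ENNReal.lintegral_mul_le_Lp_mul_Lq (volume.restrict (ball y r)) hc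
      hwmeas.aemeasurable hwmeas.inv.aemeasurable
    refine le_trans (le_of_eq ?_) h1
    rw [← setLIntegral_one]
    apply lintegral_congr_ae
    filter_upwards [ae_restrict_of_ae hw] with x hx
    simp only [Pi.mul_apply, Pi.inv_apply]
    exact (ENNReal.mul_inv_cancel hx.1.ne' hx.2.ne).symm
  have hS : (∫⁻ x in ball y r, (w x)⁻¹ ^ q) ^ (1 / q) ≤
      (∫⁻ x in ball y (2 * r), (w x)⁻¹ ^ q) ^ (1 / q) := by
    apply ENNReal.rpow_le_rpow _ (by positivity)
    exact lintegral_mono_set (ball_subset_ball (by linarith))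
  have hB := hK y (2 * r) (by positivity)
  have hvol : volume (ball y (2 * r)) = 2 ^ n * volume (ball y r) := by
    rw [Measure.addHaar_ball_mul_of_pos volume y (by norm_num : (0:ℝ) < 2) r,
      ← Measure.addHaar_ball_center volume y r]
    simp [ENNReal.ofReal_pow]
  have hv0 : volume (ball y r) ≠ 0 := (measure_ball_pos volume y hr).ne'
  have hvt : volume (ball y r) ≠ ∞ := measure_ball_lt_top.ne
  have hV0 : volume (ball y (2 * r)) ≠ 0 := (measure_ball_pos volume y (by positivity)).ne'
  have hVt : volume (ball y (2 * r)) ≠ ∞ := measure_ball_lt_top.ne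
  set W := (∫⁻ x in ball y (2 * r), w x ^ p) ^ (1 / p)
  set W' := (∫⁻ x in ball y r, w x ^ p) ^ (1 / p)
  set S := (∫⁻ x in ball y (2 * r), (w x)⁻¹ ^ q) ^ (1 / q)
  set V := volume (ball y (2 * r))
  set v := volume (ball y r)
  have hWS : W * S ≤ K * V := by
    calc W * S = (V * V⁻¹) * (W * S) := by rw [ENNReal.mul_inv_cancel hV0 hVt, one_mul]
      _ = V * (V⁻¹ * W * S) := by ring
      _ ≤ V * K := by gcongr
      _ = K * V := mul_comm _ _
  have h2 : W * v ≤ (K * 2 ^ n * W') * v := by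
    calc W * v ≤ W * (W' * S) := by gcongr; exact hH.trans (by gcongr)
      _ = (W * S) * W' := by ring
      _ ≤ (K * V) * W' := by gcongr
      _ = _ := by rw [hvol]; ring
  have h3 : W ≤ K * 2 ^ n * W' := (ENNReal.mul_le_mul_iff_left hv0 hvt).1 h2
  exact h3.trans (by gcongr; exact le_self_add)

/-- if a weight `w` satisfies the Berezhnoi–Muckenhoupt condition for some
exponent `p ∈ (1,∞)`, then every nonempty open cone `C` with vertex at the origin contains
a sequence of pairwise disjoint balls `B(y_j, τ R_j)` (for some `τ > 1`), with radii
strictly increasing to infinity, on which the weighted measure `w^p dx` is doubling with a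
uniform constant `A`. -/
theorem separated_doubling_on_cone_of_BM (n : ℕ) (hn : 1 ≤ n) (p q : ℝ) (hp : 1 < p)
    (hpq : 1 / p + 1 / q = 1) (w : Eucl n → ℝ≥0∞) (hwmeas : Measurable w)
    (hw : ∀ᵐ x : Eucl n, 0 < w x ∧ w x < ∞) (hBM : BMCondition w p q)
    (C : Set (Eucl n)) (hCopen : IsOpen C) (hCne : C.Nonempty)
    (hcone : ∀ x ∈ C, ∀ α : ℝ, 0 < α → α • x ∈ C) :
    ∃ τ : ℝ, 1 < τ ∧ ∃ A : ℝ≥0∞, 0 < A ∧ A ≠ ∞ ∧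
      ∃ (y : ℕ → Eucl n) (R : ℕ → ℝ),
        (∀ j, y j ∈ C) ∧ (∀ j, 0 < R j) ∧ StrictMono R ∧ Tendsto R atTop atTop ∧
        (∀ j, ball (y j) (τ * R j) ⊆ C) ∧
        (∀ j k, j ≠ k → ball (y j) (τ * R j) ∩ ball (y k) (τ * R k) = ∅) ∧
        ∀ j, (∫⁻ x in ball (y j) (τ * R j), w x ^ p) ^ (1 / p)
          ≤ A * (∫⁻ x in ball (y j) (R j), w x ^ p) ^ (1 / p) := by
  obtain ⟨K, hKt, hK⟩ := hBM
  haveI : Nonempty (Fin n) := ⟨⟨0, hn⟩⟩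
  obtain ⟨x0, hx0C, hx0⟩ : ∃ x ∈ C, x ≠ 0 := by
    by_contra! h
    obtain ⟨x, hx⟩ := hCne
    have hC : C = {0} := by
      ext z
      constructor
      · exact fun hz => h z hz
      · intro hz
        rw [Set.mem_singleton_iff.1 hz, ← h x hx]
        exact hx
    rw [hC] at hCopen
    exact not_isOpen_singleton (0 : Eucl n) hCopen
  obtain ⟨δ, hδ, hball⟩ := Metric.isOpen_iff.1 hCopen x0 hx0C
  have hN : 0 < ‖x0‖ := norm_pos_iff.2 hx0
  obtain ⟨ε, hε, hεδ, hεN⟩ : ∃ ε : ℝ, 0 < ε ∧ ε ≤ δ ∧ 3 * ε ≤ ‖x0‖ :=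
    ⟨min δ (‖x0‖ / 3), by positivity, min_le_left _ _, by
      have := min_le_right δ (‖x0‖ / 3); linarith⟩
  have hdis : ∀ j k : ℕ, j < k → ∀ z : Eucl n, z ∈ ball ((2:ℝ) ^ j • x0) (2 * (2 ^ j * (ε / 2))) →
      z ∈ ball ((2:ℝ) ^ k • x0) (2 * (2 ^ k * (ε / 2))) → False := by
    intro j k hjk z hj hk
    rw [mem_ball, dist_eq_norm] at hj hk
    have h1 := norm_sub_norm_le z ((2:ℝ) ^ j • x0)
    have h2 := norm_sub_norm_le ((2:ℝ) ^ k • x0) z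
    rw [norm_sub_rev] at h2
    rw [norm_smul, Real.norm_of_nonneg (by positivity)] at h1 h2
    have h3 : (2:ℝ) ^ (j + 1) ≤ 2 ^ k := pow_le_pow_right₀ (by norm_num) hjk
    rw [pow_succ] at h3
    have h4 : (0:ℝ) < 2 ^ j := by positivity
    have h5 : (2:ℝ) ^ k * (‖x0‖ - ε) < 2 ^ j * (‖x0‖ + ε) := by nlinarith
    have h6 : (2:ℝ) ^ j * 2 * (‖x0‖ - ε) ≤ 2 ^ k * (‖x0‖ - ε) :=
      mul_le_mul_of_nonneg_right h3 (by linarith)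
    have h7 : (2:ℝ) ^ j * (3 * ε) ≤ 2 ^ j * ‖x0‖ := by gcongr
    nlinarith
  refine ⟨2, by norm_num, K * 2 ^ n + 1, by positivity, ?_, fun j => (2:ℝ) ^ j • x0,
    fun j => 2 ^ j * (ε / 2), ?_, ?_, ?_, ?_, ?_, ?_, ?_⟩
  · exact ENNReal.add_ne_top.2 ⟨ENNReal.mul_ne_top hKt (by simp), by simp⟩
  · exact fun j => hcone x0 hx0C _ (by positivity)
  · intro j; positivity
  · exact (pow_right_strictMono₀ (by norm_num : (1:ℝ) < 2)).mul_const (by positivity)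
  · exact (tendsto_pow_atTop_atTop_of_one_lt (by norm_num : (1:ℝ) < 2)).atTop_mul_const
      (by positivity)
  · intro j z hz
    have h4 : (0:ℝ) < 2 ^ j := by positivity
    have hz' : ((2:ℝ) ^ j)⁻¹ • z ∈ C := by
      apply hball
      rw [mem_ball, dist_eq_norm] at hz ⊢
      have : ((2:ℝ) ^ j)⁻¹ • z - x0 = ((2:ℝ) ^ j)⁻¹ • (z - (2:ℝ) ^ j • x0) := by
        rw [smul_sub, inv_smul_smul₀ h4.ne']
      rw [this, norm_smul, Real.norm_of_nonneg (by positivity), inv_mul_lt_iff₀ h4]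
      nlinarith
    have := hcone _ hz' _ h4
    rwa [smul_inv_smul₀ h4.ne'] at this
  · intro j k hjk
    rw [Set.eq_empty_iff_forall_notMem]
    rintro z ⟨hj, hk⟩
    rcases lt_or_gt_of_ne hjk with h | h
    · exact hdis j k h z hj hk
    · exact hdis k j h z hk hj
  · intro j
    exact bm_doubling_aux n hn p q hp hpq w hwmeas hw K hK _ _ (by positivity)

end
end

section
/- Let n ≥ 1, 1 < p < ∞, and let w be a weight on ℝⁿ satisfying the Berezhnoi–Muckenhoupt condition for exponent p. Then there exist τ > 1 and a constant A ∈ (0,∞) such that for all y ∈ ℝⁿ and all R > 0, (∫_{B(y,τR)} w(x)^p dx)^{1/p} ≤ A · (∫_{B(y,R)} w(x)^p dx)^{1/p}. -/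
open MeasureTheory Filter Metric ENNReal NNReal

noncomputable section

/-- a weight satisfying the Berezhnoi–Muckenhoupt condition for some exponent
`p ∈ (1,∞)` has the strong doubling property. -/
theorem strong_doubling_of_BM (n : ℕ) (hn : 1 ≤ n) (p q : ℝ) (hp : 1 < p)
    (hpq : 1 / p + 1 / q = 1) (w : Eucl n → ℝ≥0∞) (hwmeas : Measurable w)
    (hw : ∀ᵐ x : Eucl n, 0 < w x ∧ w x < ∞) (hBM : BMCondition w p q) :
    ∃ τ : ℝ, 1 < τ ∧ ∃ A : ℝ≥0∞, 0 < A ∧ A ≠ ∞ ∧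
      ∀ (y : Eucl n) (R : ℝ), 0 < R →
        (∫⁻ x in ball y (τ * R), w x ^ p) ^ (1 / p)
          ≤ A * (∫⁻ x in ball y R, w x ^ p) ^ (1 / p) := by
  obtain ⟨K, hK, h⟩ := hBM
  have hc : p.HolderConjugate q := by
    rw [Real.holderConjugate_iff]
    exact ⟨hp, by simpa using hpq⟩
  refine ⟨2, by norm_num, K * ENNReal.ofReal (2 ^ n) + 1, by positivity, by finiteness, ?_⟩
  intro y R hR
  have h2 := h y (2 * R) (by positivity)
  have hvol : volume (ball y (2 * R)) = ENNReal.ofReal (2 ^ n) * volume (ball y R) := by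
    have := Measure.addHaar_ball_mul_of_pos (volume : Measure (Eucl n)) y (r := 2) (by norm_num) R
    rw [this, Measure.addHaar_ball_center volume y R]
    simp
  have hB0 : volume (ball y R) ≠ 0 := (measure_ball_pos volume y hR).ne'
  have hBt : volume (ball y R) ≠ ∞ := measure_ball_lt_top.ne
  have hB0' : volume (ball y (2 * R)) ≠ 0 := (measure_ball_pos volume y (by positivity)).ne'
  have hBt' : volume (ball y (2 * R)) ≠ ∞ := measure_ball_lt_top.ne
  have hH : volume (ball y R) ≤ (∫⁻ x in ball y R, w x ^ p) ^ (1 / p) *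
      (∫⁻ x in ball y (2 * R), (w x)⁻¹ ^ q) ^ (1 / q) := by
    have h1 : volume (ball y R) = ∫⁻ x in ball y R, (w * fun x => (w x)⁻¹) x := by
      rw [← setLIntegral_one]
      apply lintegral_congr_ae
      filter_upwards [ae_restrict_of_ae hw] with x hx
      simp [ENNReal.mul_inv_cancel hx.1.ne' hx.2.ne]
    rw [h1]
    refine (ENNReal.lintegral_mul_le_Lp_mul_Lq (volume.restrict (ball y R)) hc
      hwmeas.aemeasurable hwmeas.inv.aemeasurable).trans ?_
    have hq : 0 ≤ 1 / q := one_div_nonneg.2 hc.symm.nonneg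
    refine mul_le_mul_right (ENNReal.rpow_le_rpow
      (lintegral_mono_set (ball_subset_ball (by linarith))) hq) _
  set a := (∫⁻ x in ball y (2 * R), w x ^ p) ^ (1 / p)
  set b := (∫⁻ x in ball y (2 * R), (w x)⁻¹ ^ q) ^ (1 / q)
  set c := (∫⁻ x in ball y R, w x ^ p) ^ (1 / p)
  have hab : a * b ≤ K * volume (ball y (2 * R)) := by
    calc a * b = volume (ball y (2 * R)) * ((volume (ball y (2 * R)))⁻¹ * a * b) := by
          rw [← mul_assoc, ← mul_assoc, ENNReal.mul_inv_cancel hB0' hBt', one_mul]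
      _ ≤ volume (ball y (2 * R)) * K := by gcongr
      _ = _ := mul_comm _ _
  have key : a * volume (ball y R) ≤ (K * ENNReal.ofReal (2 ^ n) * c) * volume (ball y R) := by
    calc a * volume (ball y R) ≤ a * (c * b) := by gcongr
      _ = (a * b) * c := by ring
      _ ≤ (K * volume (ball y (2 * R))) * c := by gcongr
      _ = _ := by rw [hvol]; ring
  have := (ENNReal.mul_le_mul_iff_left hB0 hBt).1 key
  refine this.trans ?_
  gcongr
  exact le_self_add

end
end

section
/- Let n ≥ 1, let Ω ⊆ ℝⁿ be a measurable set, and let μ be a Borel measure on ℝⁿ with 0 < μ(B) < ∞ for every open ball B. Suppose there exist ρ > 1, a constant S ∈ (0,∞), points y_j ∈ Ω and radii R_j strictly increasing to ∞ such that B(y_j, ρR_j) ⊆ Ω for all j, B(y_j, ρR_j) ∩ B(y_k, ρR_k) = ∅ for j ≠ k, and μ(B(y_j, ρR_j)) ≤ S · μ(B(y_j, R_j)) for all j. Then for every ε > 0 there exist τ > 1, points z_k ∈ Ω and radii r_k strictly increasing to ∞ such that B(z_k, τr_k) ⊆ Ω for all k, B(z_k, τr_k) ∩ B(z_l, τr_l)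 = ∅ for k ≠ l, and μ(B(z_k, τr_k)) ≤ (1 + ε) · μ(B(z_k, r_k)) for all k ∈ ℕ. -/
open MeasureTheory Filter Metric ENNReal NNReal

noncomputable section

/-- if a Borel measure `μ` on `ℝⁿ`, positive and finite on open balls, is
doubling (with some constant `S`) along a sequence of pairwise disjoint balls
`B(y_j, ρ R_j) ⊆ Ω` with radii strictly increasing to infinity, then for every `ε > 0`
there is `τ > 1` and a sequence of pairwise disjoint balls `B(z_k, τ r_k) ⊆ Ω` with radii
strictly increasing to infinity along which `μ` is doubling with constant `1 + ε`. -/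
theorem separated_doubling_constant_close_to_one (n : ℕ) (hn : 1 ≤ n)
    (Ω : Set (Eucl n)) (hΩ : MeasurableSet Ω) (μ : Measure (Eucl n))
    (hμ : ∀ (y : Eucl n) (r : ℝ), 0 < r → 0 < μ (ball y r) ∧ μ (ball y r) < ∞)
    (ρ : ℝ) (hρ : 1 < ρ) (S : ℝ≥0∞) (hS0 : 0 < S) (hStop : S ≠ ∞)
    (y : ℕ → Eucl n) (R : ℕ → ℝ) (hy : ∀ j, y j ∈ Ω) (hRpos : ∀ j, 0 < R j)
    (hRmono : StrictMono R) (hRtop : Tendsto R atTop atTop)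
    (hsub : ∀ j, ball (y j) (ρ * R j) ⊆ Ω)
    (hdisj : ∀ j k, j ≠ k → ball (y j) (ρ * R j) ∩ ball (y k) (ρ * R k) = ∅)
    (hdoub : ∀ j, μ (ball (y j) (ρ * R j)) ≤ S * μ (ball (y j) (R j))) :
    ∀ ε : ℝ≥0∞, 0 < ε →
      ∃ τ : ℝ, 1 < τ ∧ ∃ (z : ℕ → Eucl n) (r : ℕ → ℝ),
        (∀ k, z k ∈ Ω) ∧ (∀ k, 0 < r k) ∧ StrictMono r ∧ Tendsto r atTop atTop ∧
        (∀ k, ball (z k) (τ * r k) ⊆ Ω) ∧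
        (∀ k l, k ≠ l → ball (z k) (τ * r k) ∩ ball (z l) (τ * r l) = ∅) ∧
        ∀ k, μ (ball (z k) (τ * r k)) ≤ (1 + ε) * μ (ball (z k) (r k)) := by
  intro ε hε
  have h1 : (1 : ℝ≥0∞) < 1 + ε := by
    simpa using ENNReal.add_lt_add_left (a := 1) ENNReal.one_ne_top hε
  have hT : Tendsto (fun N : ℕ => (1 + ε) ^ N) atTop (nhds ∞) :=
    ENNReal.tendsto_pow_atTop_nhds_top_iff.2 h1
  obtain ⟨N, hN, hN0⟩ := ((hT.eventually (lt_mem_nhds (lt_top_iff_ne_top.2 hStop))).and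
    (eventually_gt_atTop 0)).exists
  have hρ0 : (0 : ℝ) ≤ ρ := by linarith
  obtain ⟨τ, hτ1, hτN⟩ : ∃ τ : ℝ, 1 < τ ∧ τ ^ N = ρ :=
    ⟨ρ ^ ((N : ℝ)⁻¹), Real.one_lt_rpow hρ (by positivity),
      Real.rpow_inv_natCast_pow hρ0 hN0.ne'⟩
  have key : ∀ j, ∃ i, i < N ∧ μ (ball (y j) (τ ^ (i + 1) * R j)) ≤
      (1 + ε) * μ (ball (y j) (τ ^ i * R j)) := by
    intro j
    by_contra! hc
    have ind : ∀ k, k ≤ N → (1 + ε) ^ k * μ (ball (y j) (R j)) ≤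
        μ (ball (y j) (τ ^ k * R j)) := by
      intro k
      induction k with
      | zero => intro _; simp
      | succ k ih =>
        intro hk
        calc (1 + ε) ^ (k + 1) * μ (ball (y j) (R j))
            = (1 + ε) * ((1 + ε) ^ k * μ (ball (y j) (R j))) := by rw [pow_succ']; ring
          _ ≤ (1 + ε) * μ (ball (y j) (τ ^ k * R j)) := by
              gcongr; exact ih (by omega)
          _ ≤ _ := (hc k (by omega)).le
    have h2 := ind N le_rfl
    rw [hτN] at h2
    have h3 := h2.trans (hdoub j)
    have h4 := hμ (y j) (R j) (hRpos j)
    exact absurd h3 (not_le.2 (ENNReal.mul_lt_mul_left h4.1.ne' h4.2.ne hN))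
  choose i hiN hi using key
  have hge : ∀ j, R j ≤ τ ^ i j * R j := fun j =>
    le_mul_of_one_le_left (hRpos j).le (one_le_pow₀ hτ1.le)
  have hsub' : ∀ j, ball (y j) (τ * (τ ^ i j * R j)) ⊆ ball (y j) (ρ * R j) := by
    intro j
    apply ball_subset_ball
    rw [← mul_assoc, ← pow_succ', ← hτN]
    exact mul_le_mul_of_nonneg_right (pow_le_pow_right₀ hτ1.le (hiN j)) (hRpos j).le
  have ht : Tendsto (fun j => τ ^ i j * R j) atTop atTop :=
    tendsto_atTop_mono hge hRtop
  obtain ⟨φ, hφ, hφ'⟩ := strictMono_subseq_of_tendsto_atTop ht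
  refine ⟨τ, hτ1, fun k => y (φ k), fun k => τ ^ i (φ k) * R (φ k), fun k => hy _,
    fun k => (hRpos _).trans_le (hge _), hφ', ht.comp hφ.tendsto_atTop,
    fun k => (hsub' _).trans (hsub _), fun k l hkl => ?_, fun k => ?_⟩
  · apply Set.subset_empty_iff.1
    rw [← hdisj (φ k) (φ l) (hφ.injective.ne hkl)]
    exact Set.inter_subset_inter (hsub' _) (hsub' _)
  · have := hi (φ k)
    rwa [pow_succ', mul_assoc] at this

end
end

section
/- Let n ≥ 1, let Ω ⊆ ℝⁿ be a measurable set, and let μ be a Borel measure on ℝⁿ with 0 < μ(B) < ∞ for every open ball B. For τ > 1 define D_τ := liminf_{R → ∞} inf{ μ(B(y, τR)) / μ(B(y, R)) : y ∈ ℝⁿ with B(y, τR) ⊆ Ω } ∈ [1, ∞] (with the inner infimum equal to +∞ if no such y exists). If D_ρ < ∞ for some ρ > 1, then inf_{τ > 1} D_τ = 1. -/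
open MeasureTheory Filter Metric ENNReal NNReal

noncomputable section

/-- The weak doubling constant `D_τ` of a measure `μ` relative to a set `Ω`:
`D_τ = liminf_{R → ∞} inf { μ(B(y,τR)) / μ(B(y,R)) : B(y,τR) ⊆ Ω }`,
where the inner infimum is `∞` if there is no admissible `y`. -/
noncomputable def weakDoublingConst {n : ℕ} (μ : Measure (Eucl n)) (Ω : Set (Eucl n))
    (τ : ℝ) : ℝ≥0∞ :=
  Filter.liminf
    (fun R : ℝ => ⨅ (y : Eucl n) (_ : ball y (τ * R) ⊆ Ω),
      μ (ball y (τ * R)) / μ (ball y R)) atTop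

/-- if a Borel measure `μ` on `ℝⁿ`, positive and finite on open balls, has
finite weak doubling constant `D_ρ < ∞` for some `ρ > 1` relative to `Ω`, then
`inf_{τ > 1} D_τ = 1`. -/
theorem weak_doubling_infimum_eq_one (n : ℕ) (hn : 1 ≤ n)
    (Ω : Set (Eucl n)) (hΩ : MeasurableSet Ω) (μ : Measure (Eucl n))
    (hμ : ∀ (y : Eucl n) (r : ℝ), 0 < r → 0 < μ (ball y r) ∧ μ (ball y r) < ∞)
    (ρ : ℝ) (hρ : 1 < ρ) (hfin : weakDoublingConst μ Ω ρ < ∞) :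
    ⨅ (τ : ℝ) (_ : 1 < τ), weakDoublingConst μ Ω τ = 1 := by
  apply le_antisymm
  · refine le_of_forall_gt_imp_ge_of_dense (fun a ha => ?_)
    have h1 : ∀ᶠ N : ℕ in atTop, weakDoublingConst μ Ω ρ < a ^ N :=
      (ENNReal.tendsto_pow_atTop_nhds_top_iff.2 ha).eventually (lt_mem_nhds hfin)
    obtain ⟨N, hN, hN1⟩ := (h1.and (eventually_ge_atTop 1)).exists
    have hN0 : N ≠ 0 := by omega
    obtain ⟨τ, hτ, hτN⟩ : ∃ τ : ℝ, 1 < τ ∧ τ ^ N = ρ := by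
      refine ⟨ρ ^ ((N : ℝ)⁻¹), Real.one_lt_rpow hρ (by positivity), ?_⟩
      exact Real.rpow_inv_natCast_pow (by linarith) hN0
    have hfr := frequently_lt_of_liminf_lt (by isBoundedDefault) hN
    refine (iInf₂_le τ hτ).trans ?_
    refine liminf_le_of_frequently_le ?_ (by isBoundedDefault)
    rw [frequently_atTop] at hfr ⊢
    intro A
    obtain ⟨R, hR, hlt⟩ := hfr (max A 1)
    have hRA : A ≤ R := (le_max_left _ _).trans hR
    have hR0 : 0 < R := lt_of_lt_of_le one_pos ((le_max_right _ _).trans hR)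
    simp only [iInf_lt_iff] at hlt
    obtain ⟨y, hy, hlt⟩ := hlt
    have hτ0 : 0 < τ := by linarith
    obtain ⟨k, hk, hkle⟩ : ∃ k < N, μ (ball y (τ * (τ ^ k * R))) ≤ a * μ (ball y (τ ^ k * R)) := by
      by_contra! hcon
      have key : ∀ k ≤ N, a ^ k * μ (ball y R) ≤ μ (ball y (τ ^ k * R)) := by
        intro k
        induction k with
        | zero => intro _; simp
        | succ k ih =>
          intro hk
          calc a ^ (k+1) * μ (ball y R) = a * (a ^ k * μ (ball y R)) := by ring
            _ ≤ a * μ (ball y (τ ^ k * R)) := by gcongr; exact ih (by omega)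
            _ ≤ μ (ball y (τ * (τ ^ k * R))) := (hcon k (by omega)).le
            _ = _ := by rw [← mul_assoc, ← pow_succ']
      have h2 := key N le_rfl
      rw [hτN] at h2
      have h3 := (ENNReal.le_div_iff_mul_le (Or.inl (hμ y R hR0).1.ne')
        (Or.inl (hμ y R hR0).2.ne)).2 h2
      exact absurd hlt (not_lt.2 h3)
    have h1k : 1 ≤ τ ^ k := one_le_pow₀ hτ.le
    refine ⟨τ ^ k * R, hRA.trans (le_mul_of_one_le_left hR0.le h1k), ?_⟩
    refine (iInf₂_le y ?_).trans (ENNReal.div_le_of_le_mul hkle)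
    refine (ball_subset_ball ?_).trans hy
    rw [← mul_assoc, ← pow_succ', ← hτN]
    gcongr
    · exact hτ.le
    · omega
  · refine le_iInf₂ (fun τ hτ => ?_)
    refine le_liminf_of_le (by isBoundedDefault) ?_
    filter_upwards [eventually_gt_atTop 0] with R hR
    refine le_iInf₂ (fun y _ => ?_)
    rw [ENNReal.le_div_iff_mul_le (Or.inl (hμ y R hR).1.ne') (Or.inl (hμ y R hR).2.ne), one_mul]
    exact measure_mono (ball_subset_ball (le_mul_of_one_le_left hR.le hτ.le))

end
end

section
/- Let n ≥ 1, let 1 ≤ p < ∞, and let w be a weight on ℝⁿ such that w ∈ L^p_loc(ℝⁿ) (∫_E w^p dx < ∞ for every bounded measurable E) and w^{-1} ∈ L^{p'}_loc(ℝⁿ) (for p > 1, ∫_E w^{-p'} dx < ∞ for every bounded measurable E, where 1/p + 1/p' = 1; for p = 1, w^{-1} is essentially bounded on every bounded measurable set). Then the compactly supported infinitely differentiable functions are dense in L^p(ℝⁿ, w): for every measurable f : ℝⁿ → ℂ with ∫_{ℝⁿ} |f(x)w(x)|^p dx < ∞ and every ε > 0 there exists g ∈ C_c^∞(ℝⁿ)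 with (∫_{ℝⁿ} |(f(x) − g(x))w(x)|^p dx)^{1/p} < ε. -/
open MeasureTheory Filter Metric ENNReal NNReal Bornology

noncomputable section

/-- The norm of `f` in the weighted Lebesgue space `L^p(ℝⁿ, w)`, i.e.
`(∫ |f(x) w(x)|^p dx)^{1/p}`, computed in `[0,∞]`. -/
noncomputable def wLpNorm {n : ℕ} (f : Eucl n → ℂ) (p : ℝ) (w : Eucl n → ℝ≥0∞) : ℝ≥0∞ :=
  (∫⁻ x : Eucl n, (‖f x‖₊ : ℝ≥0∞) ^ p * w x ^ p) ^ (1 / p)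

/-- if `w ∈ L^p_loc(ℝⁿ)` and `w⁻¹ ∈ L^{p'}_loc(ℝⁿ)` (for `p = 1`, `w⁻¹` is
essentially bounded on bounded sets), then `C_c^∞(ℝⁿ)` is dense in the weighted Lebesgue
space `L^p(ℝⁿ, w)`. -/
theorem smooth_compactly_supported_dense_in_weighted_Lp (n : ℕ) (hn : 1 ≤ n)
    (p : ℝ) (hp1 : 1 ≤ p) (w : Eucl n → ℝ≥0∞) (hwmeas : Measurable w)
    (hw : ∀ᵐ x : Eucl n, 0 < w x ∧ w x < ∞)
    (hwloc : ∀ E : Set (Eucl n), MeasurableSet E → IsBounded E →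
      (∫⁻ x in E, w x ^ p) < ∞)
    (hwloc' : 1 < p → ∀ q : ℝ, 1 / p + 1 / q = 1 →
      ∀ E : Set (Eucl n), MeasurableSet E → IsBounded E →
        (∫⁻ x in E, (w x)⁻¹ ^ q) < ∞)
    (hwloc1 : p = 1 → ∀ E : Set (Eucl n), MeasurableSet E → IsBounded E →
      ∃ K : ℝ≥0∞, K ≠ ∞ ∧ ∀ᵐ x ∂(volume.restrict E), (w x)⁻¹ ≤ K)
    (f : Eucl n → ℂ) (hfmeas : Measurable f) (hf : wLpNorm f p w < ∞) :
    ∀ ε : ℝ, 0 < ε → ∃ g : Eucl n → ℂ, ContDiff ℝ (⊤ : ℕ∞) g ∧ HasCompactSupport g ∧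
      wLpNorm (f - g) p w < ENNReal.ofReal ε := by
  intro ε hε
  have hp0 : 0 < p := by linarith
  have hwp : Measurable fun x => w x ^ p := hwmeas.pow_const p
  set μ : Measure (Eucl n) := volume.withDensity fun x => w x ^ p with hμ
  have key : ∀ h : Eucl n → ℂ, Measurable h →
      wLpNorm h p w = eLpNorm h (ENNReal.ofReal p) μ := by
    intro h hh
    rw [eLpNorm_eq_lintegral_rpow_enorm_toReal (by simpa using hp0) ENNReal.ofReal_ne_top,
      ENNReal.toReal_ofReal hp0.le, hμ,
      lintegral_withDensity_eq_lintegral_mul _ hwp (hh.enorm.pow_const p)]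
    unfold wLpNorm
    congr 1
    refine lintegral_congr fun x => ?_
    simp [mul_comm, enorm_eq_nnnorm]
  haveI : IsFiniteMeasureOnCompacts μ := by
    refine ⟨fun K hK => ?_⟩
    rw [hμ, withDensity_apply _ hK.measurableSet]
    exact hwloc K hK.measurableSet hK.isBounded
  have hmem : MemLp f (ENNReal.ofReal p) μ :=
    ⟨hfmeas.aestronglyMeasurable, by rw [← key f hfmeas]; exact hf⟩
  haveI : Fact (1 ≤ ENNReal.ofReal p) := ⟨by simpa using hp1⟩
  obtain ⟨g, hg1, hg2, hg3⟩ := hmem.exist_eLpNorm_sub_le ENNReal.ofReal_ne_top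
    (by simpa using hp1) (half_pos hε)
  refine ⟨g, hg2, hg1, ?_⟩
  rw [key _ (hfmeas.sub hg2.continuous.measurable)]
  exact hg3.trans_lt ((ENNReal.ofReal_lt_ofReal_iff hε).2 (half_lt_self hε))

end
end
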